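/- Let C be a unital C*-algebra, let z be a positive invertible element of the center of C, and let e_1, …, e_N be projections in C satisfying the Jones relations e_k e_{k+1} e_k = z^{-1} e_k, e_{k+1} e_k e_{k+1} = z^{-1} e_{k+1}, and e_k e_l = e_l e_k for |k − l| > 1 (all indices in {1, …, N}). Fix k ≥ 0, and let v_1, …, v_r ∈ C be elements commuting with e_l for every l ≥ k + 2 (in range) and satisfying Σ_{j=1}^r v_j e_{k+1} v_j^* = 1. Then for every n ≥ 1 with 2n + k − 1 ≤ N: Σ_{j=1}^r v_j g_n^{(k)} v_j^* = z^{−(n−1)} g_{n−1}^{(k+1)}. -/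

import Mathlib

/-- The descending product `e a * e (a - 1) * ⋯ * e b` (equal to `1` when `b > a`). -/
def dProd {C : Type*} [Monoid C] (e : ℕ → C) (a b : ℕ) : C :=
  ((List.range (a + 1 - b)).map fun i => e (a - i)).prod

/-- The ascending product `e a * e (a + 1) * ⋯ * e b` (equal to `1` when `a > b`). -/
def aProd {C : Type*} [Monoid C] (e : ℕ → C) (a b : ℕ) : C :=
  ((List.range (b + 1 - a)).map fun i => e (a + i)).prod

/-- `gElt e n j` is the element
`g_n^{(j)} = (e_{n+j} e_{n+j-1} ⋯ e_{j+1}) (e_{n+j+1} e_{n+j} ⋯ e_{j+2}) ⋯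
(e_{2n+j-1} e_{2n+j-2} ⋯ e_{n+j})`, a product of `n` blocks whose `i`-th block
(`1 ≤ i ≤ n`) is the descending product `e_{n+j+i-1} e_{n+j+i-2} ⋯ e_{j+i}`;
and `g_0^{(j)} = 1`. -/
def gElt {C : Type*} [Monoid C] (e : ℕ → C) (n j : ℕ) : C :=
  ((List.range n).map fun i => dProd e (n + j + i) (j + i + 1)).prod

/-!
The factor `e (k + 1)` occurs only once in `gElt e (n + 1) k`, at the end of the first block, so
`gElt e (n + 1) k = A * e (k + 1) * B` where `A` and `B` are words in the `e l` with `l ≥ k + 2`.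
These commute with the `v j` and `star (v j)`, so the sum collapses to `A * B`. Now `A` is swept
through the blocks of `B` from left to right: each passage applies one relation
`e q * e (q + 1) * e q = w * e q` with `w = z⁻¹`, which releases a factor `w`, lowers the top index
of the block by one, and leaves behind a remnant of `A` shorter by one letter. After `n` passages
nothing remains of `A`, and the lowered blocks form `gElt e n (k + 1)`.
-/

section Monoid

variable {C : Type*} [Monoid C] (e : ℕ → C)

theorem dProd_self (p : ℕ) : dProd e p p = e p := by
  simp [dProd]

theorem dProd_of_lt {p c : ℕ} (h : p < c) : dProd e p c = 1 := by
  simp [dProd, Nat.sub_eq_zero_of_le (Nat.succ_le_of_lt h)]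

theorem dProd_mul_dProd {p q c : ℕ} (hqp : q ≤ p) (hcq : c ≤ q + 1) :
    dProd e p (q + 1) * dProd e q c = dProd e p c := by
  have hlen : p + 1 - c = (p + 1 - (q + 1)) + (q + 1 - c) := by omega
  have hidx (i : ℕ) : p - (p + 1 - (q + 1) + i) = q - i := by omega
  simp only [dProd, hlen, List.range_add, List.map_append, List.prod_append, List.map_map,
    Function.comp_def, hidx]

theorem dProd_succ_mul {p c : ℕ} (h : c ≤ p) : dProd e p (c + 1) * e c = dProd e p c := by
  simpa only [dProd_self] using dProd_mul_dProd e h c.le_succ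

/-- The product of `t` consecutive blocks
`(e m ⋯ e b) * (e (m + 1) ⋯ e (b + 1)) * ⋯ * (e (m + t - 1) ⋯ e (b + t - 1))`.
It generalizes `gElt` by letting the length and the number of the blocks vary independently. -/
def staircaseProd (m b t : ℕ) : C :=
  ((List.range t).map fun i => dProd e (m + i) (b + i)).prod

theorem staircaseProd_zero (m b : ℕ) : staircaseProd e m b 0 = 1 := by
  simp [staircaseProd]

theorem staircaseProd_succ (m b t : ℕ) :
    staircaseProd e m b (t + 1) = staircaseProd e m b t * dProd e (m + t) (b + t) :=
  List.prod_range_succ _ t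

theorem staircaseProd_succ' (m b t : ℕ) :
    staircaseProd e m b (t + 1) = dProd e m b * staircaseProd e (m + 1) (b + 1) t := by
  simp only [staircaseProd, List.prod_range_succ', add_zero, Nat.succ_eq_add_one,
    add_assoc, add_comm 1]

theorem gElt_eq_staircaseProd (n j : ℕ) : gElt e n j = staircaseProd e (n + j) (j + 1) n := by
  simp only [gElt, staircaseProd, add_right_comm]

theorem gElt_succ (n k : ℕ) :
    gElt e (n + 1) k =
      dProd e (n + k + 1) (k + 2) * e (k + 1) * staircaseProd e (n + k + 2) (k + 2) n := by
  rw [gElt_eq_staircaseProd, staircaseProd_succ', add_right_comm n 1 k,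
    dProd_succ_mul e (by omega : k + 1 ≤ n + k + 1)]

variable {e}

theorem commute_dProd {x : C} {p c : ℕ} (h : ∀ l, c ≤ l → l ≤ p → Commute x (e l)) :
    Commute x (dProd e p c) := by
  refine Commute.list_prod_right _ _ fun y hy => ?_
  obtain ⟨i, hi, rfl⟩ := List.mem_map.1 hy
  rw [List.mem_range] at hi
  exact h _ (by omega) (by omega)

theorem commute_staircaseProd {x : C} {m b t : ℕ}
    (h : ∀ l, b ≤ l → l < m + t → Commute x (e l)) : Commute x (staircaseProd e m b t) := by
  refine Commute.list_prod_right _ _ fun y hy => ?_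
  obtain ⟨i, hi, rfl⟩ := List.mem_map.1 hy
  rw [List.mem_range] at hi
  exact commute_dProd fun l _ _ => h l (by omega) (by omega)

/-- The relations between `e 1, …, e N` that let a descending product be swept through a staircase:
the Jones relations in which the lower index is on the outside, with `w` in the place of `z⁻¹`. -/
structure LowerJonesRelations (N : ℕ) (w : C) (e : ℕ → C) : Prop where
  commute_scalar : ∀ l, 1 ≤ l → l ≤ N → Commute w (e l)
  mul_succ_mul : ∀ l, 1 ≤ l → l + 1 ≤ N → e l * e (l + 1) * e l = w * e l
  commute_of_lt : ∀ l m, 1 ≤ l → l + 1 < m → m ≤ N → Commute (e l) (e m)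

namespace LowerJonesRelations

variable {N : ℕ} {w : C}

theorem commute_scalar_dProd (h : LowerJonesRelations N w e) {p c : ℕ} (hc : 1 ≤ c) (hp : p ≤ N) :
    Commute w (dProd e p c) :=
  commute_dProd fun l _ _ => h.commute_scalar l (by omega) (by omega)

theorem commute_scalar_staircaseProd (h : LowerJonesRelations N w e) {m b t : ℕ} (hb : 1 ≤ b)
    (hN : m + t ≤ N + 1) : Commute w (staircaseProd e m b t) :=
  commute_staircaseProd fun l _ _ => h.commute_scalar l (by omega) (by omega)

theorem commute_dProd_dProd (h : LowerJonesRelations N w e) {p c q d : ℕ} (hc : 1 ≤ c)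
    (hpd : p + 1 < d) (hq : q ≤ N) : Commute (dProd e p c) (dProd e q d) :=
  commute_dProd fun m _ _ => Commute.symm <| commute_dProd fun l _ _ =>
    (h.commute_of_lt l m (by omega) (by omega) (by omega)).symm

theorem dProd_mul_dProd_succ_self (h : LowerJonesRelations N w e) {p q : ℕ} (hq : 1 ≤ q)
    (hqp : q ≤ p) (hp : p + 1 ≤ N) :
    dProd e p q * dProd e (p + 1) q = w * (dProd e p q * dProd e (p + 1) (q + 2)) := by
  have hcomm : Commute (e q) (dProd e (p + 1) (q + 2)) := by
    simpa only [dProd_self] using h.commute_dProd_dProd (p := q) hq (by omega) hp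
  have hw : Commute w (dProd e p (q + 1) * dProd e (p + 1) (q + 2)) :=
    (h.commute_scalar_dProd (by omega) (by omega)).mul_right
      (h.commute_scalar_dProd (by omega) hp)
  rw [← dProd_succ_mul e hqp, ← dProd_succ_mul e (by omega : q ≤ p + 1),
    ← dProd_succ_mul e (by omega : q + 1 ≤ p + 1)]
  generalize dProd e p (q + 1) = A at hw ⊢
  generalize dProd e (p + 1) (q + 2) = X at hcomm hw ⊢
  calc A * e q * (X * e (q + 1) * e q)
      = A * (e q * X) * e (q + 1) * e q := by simp only [mul_assoc]
    _ = A * X * (e q * e (q + 1) * e q) := by simp only [hcomm.eq, mul_assoc]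
    _ = A * X * w * e q := by rw [h.mul_succ_mul q hq (by omega), mul_assoc (A * X)]
    _ = w * (A * (X * e q)) := by rw [← hw.eq]; simp only [mul_assoc]
    _ = w * (A * e q * X) := by rw [← hcomm.eq, mul_assoc A]

theorem dProd_mul_dProd_succ (h : LowerJonesRelations N w e) {p q c : ℕ} (hc : 1 ≤ c)
    (hcq : c ≤ q + 1) (hqp : q + 1 ≤ p) (hp : p + 1 ≤ N) :
    dProd e p (q + 1) * dProd e (p + 1) c = w * (dProd e p c * dProd e (p + 1) (q + 3)) :=
  calc dProd e p (q + 1) * dProd e (p + 1) c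
      = dProd e p (q + 1) * dProd e (p + 1) (q + 1) * dProd e q c := by
        rw [mul_assoc, dProd_mul_dProd e (by omega) hcq]
    _ = w * (dProd e p (q + 1) * (dProd e (p + 1) (q + 3) * dProd e q c)) := by
        rw [h.dProd_mul_dProd_succ_self (by omega) hqp hp]
        simp only [mul_assoc]
    _ = w * (dProd e p (q + 1) * dProd e q c * dProd e (p + 1) (q + 3)) := by
        rw [← (h.commute_dProd_dProd hc (by omega) hp).eq, mul_assoc (dProd e p (q + 1))]
    _ = w * (dProd e p c * dProd e (p + 1) (q + 3)) := by
        rw [dProd_mul_dProd e (by omega) hcq]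

theorem dProd_mul_staircaseProd (h : LowerJonesRelations N w e) {m b t : ℕ} (ht : b + t ≤ m)
    (hN : m + t ≤ N) :
    dProd e m (b + 1) * staircaseProd e (m + 1) (b + 1) t =
      w ^ t * (staircaseProd e m (b + 1) t * dProd e (m + t) (b + 2 * t + 1)) := by
  induction t with
  | zero => simp [staircaseProd_zero]
  | succ t ih =>
    have hstep := h.dProd_mul_dProd_succ (p := m + t) (q := b + 2 * t) (c := b + 1 + t)
      (by omega) (by omega) (by omega) (by omega)
    have hw : Commute w (staircaseProd e m (b + 1) t) :=
      h.commute_scalar_staircaseProd (by omega) (by omega)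
    rw [staircaseProd_succ, staircaseProd_succ, ← mul_assoc, ih (by omega) (by omega),
      add_right_comm m 1 t, mul_assoc, mul_assoc, hstep, ← mul_assoc _ w, ← hw.eq, pow_succ]
    simp only [mul_assoc, mul_add, add_assoc]

theorem dProd_mul_staircaseProd_eq_gElt (h : LowerJonesRelations N w e) {n k : ℕ}
    (hN : 2 * n + k + 1 ≤ N) :
    dProd e (n + k + 1) (k + 2) * staircaseProd e (n + k + 2) (k + 2) n =
      w ^ n * gElt e n (k + 1) := by
  rw [h.dProd_mul_staircaseProd (by omega) (by omega), dProd_of_lt e (by omega), mul_one,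
    gElt_eq_staircaseProd, add_assoc n k 1]

end LowerJonesRelations

end Monoid

section Semiring

variable {C ι : Type*} [Semiring C] [Fintype ι]

theorem sum_mul_mul_mul_mul_of_commute {a b : C} (x : C) {u v : ι → C}
    (hu : ∀ j, Commute (u j) a) (hv : ∀ j, Commute (v j) b) :
    ∑ j, u j * (a * x * b) * v j = a * (∑ j, u j * x * v j) * b := by
  rw [Finset.mul_sum, Finset.sum_mul]
  refine Finset.sum_congr rfl fun j _ => ?_
  calc u j * (a * x * b) * v j
      = u j * a * x * (b * v j) := by simp only [mul_assoc]
    _ = a * u j * x * (v j * b) := by rw [(hu j).eq, (hv j).eq]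
    _ = a * (u j * x * v j) * b := by simp only [mul_assoc]

theorem jones_g_quasiBasis_sum_general {N : ℕ} {w : C} {e : ℕ → C}
    (h : LowerJonesRelations N w e) {k : ℕ} {u v : ι → C}
    (hu : ∀ j l, k + 2 ≤ l → l ≤ N → Commute (u j) (e l))
    (hv : ∀ j l, k + 2 ≤ l → l ≤ N → Commute (v j) (e l))
    (hsum : ∑ j, u j * e (k + 1) * v j = 1) {n : ℕ} (hN : 2 * n + k + 1 ≤ N) :
    ∑ j, u j * gElt e (n + 1) k * v j = w ^ n * gElt e n (k + 1) := by
  have hleft (j : ι) : Commute (u j) (dProd e (n + k + 1) (k + 2)) :=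
    commute_dProd fun l hl _ => hu j l hl (by omega)
  have hright (j : ι) : Commute (v j) (staircaseProd e (n + k + 2) (k + 2) n) :=
    commute_staircaseProd fun l hl _ => hv j l hl (by omega)
  rw [gElt_succ, sum_mul_mul_mul_mul_of_commute _ hleft hright, hsum, mul_one,
    h.dProd_mul_staircaseProd_eq_gElt hN]

end Semiring

/-- In a unital C*-algebra with a positive invertible central element `z` and projections
`e₁, …, e_N` satisfying the Jones relations, if `v₁, …, v_r` commute with `e_l` for all
`l ≥ k + 2` and satisfy `∑ⱼ vⱼ e_{k+1} vⱼ* = 1`, then for `n ≥ 1` with `2n + k - 1 ≤ N`,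
`∑ⱼ vⱼ g_n^{(k)} vⱼ* = z^{-(n-1)} g_{n-1}^{(k+1)}`. -/
theorem jones_g_quasiBasis_sum
    {C : Type*} [CStarAlgebra C] [PartialOrder C] [StarOrderedRing C]
    (N : ℕ) (z : C) [Invertible z] (hzpos : 0 ≤ z) (hzc : ∀ c : C, z * c = c * z)
    (e : ℕ → C)
    (hproj : ∀ k, 1 ≤ k → k ≤ N → star (e k) = e k ∧ e k * e k = e k)
    (h1 : ∀ k, 1 ≤ k → k + 1 ≤ N → e k * e (k + 1) * e k = ⅟z * e k)
    (h2 : ∀ k, 1 ≤ k → k + 1 ≤ N → e (k + 1) * e k * e (k + 1) = ⅟z * e (k + 1))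
    (h3 : ∀ k l, 1 ≤ k → k ≤ N → 1 ≤ l → l ≤ N → (k + 1 < l ∨ l + 1 < k) →
      e k * e l = e l * e k)
    (k r : ℕ) (v : Fin r → C)
    (hvcomm : ∀ (j : Fin r) (l : ℕ), k + 2 ≤ l → l ≤ N → v j * e l = e l * v j)
    (hvsum : ∑ j, v j * e (k + 1) * star (v j) = 1)
    (n : ℕ) (hn : 1 ≤ n) (hrange : 2 * n + k - 1 ≤ N) :
    ∑ j, v j * gElt e n k * star (v j) = (⅟z) ^ (n - 1) * gElt e (n - 1) (k + 1) := by
  obtain ⟨n, rfl⟩ := Nat.exists_eq_add_of_le' hn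
  have hrel : LowerJonesRelations N (⅟z) e :=
    ⟨fun l _ _ => Commute.invOf_left (hzc (e l)), h1,
      fun l m hl hlm hm => h3 l m hl (by omega) (by omega) hm (.inl hlm)⟩
  have hstar (j : Fin r) (l : ℕ) (hkl : k + 2 ≤ l) (hl : l ≤ N) : Commute (star (v j)) (e l) :=
    (hproj l (by omega) hl).1 ▸ Commute.star_star (hvcomm j l hkl hl)
  exact jones_g_quasiBasis_sum_general hrel hvcomm hstar hvsum (by omega)
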